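/- Assume that (x,y) = γ̃x + γ̃y + α is a decoupling of (x,y) in the orbit, and let H ∈ ℂ(X,Y,t) be a regular fraction. Then the following are equivalent: (1) H admits a Galois decoupling; (2) H_α = 0; (3) H_{(x,y)} = H_{γ̃x} + H_{γ̃y} is a Galois decoupling of H, i.e. H_{γ̃x} ∈ k(x) and H_{γ̃y} ∈ k(y). -/

import Mathlib

open IntermediateField
open scoped BigOperators Classical

set_option synthInstance.maxHeartbeats 1000000
set_option maxHeartbeats 1600000

noncomputable section

namespace QuadrantWalk

variable {K : Type} [Field K] [Algebra ℂ K]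

/-- Evaluation of the step (Laurent) polynomial `S(X,Y) = ∑ w_{i,j} X^i Y^j`
    at a pair of elements of a field. -/
def stepEval (St : Finset (ℤ × ℤ)) (w : ℤ × ℤ → ℂ) (u v : K) : K :=
  ∑ p ∈ St, algebraMap ℂ K (w p) * u ^ p.1 * v ^ p.2

/-- The step polynomial involves both `X` and `Y`. -/
def NotUnivariate (St : Finset (ℤ × ℤ)) : Prop :=
  (∃ p ∈ St, ∃ q ∈ St, p.1 ≠ q.1) ∧ ∃ p ∈ St, ∃ q ∈ St, p.2 ≠ q.2

/-- The kernel polynomial `K̃(X,Y,t) = X^mx * Y^my * (1 - t·S(X,Y))` as an element of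
`ℂ[X,Y,t]`, with variables `0 ↦ X`, `1 ↦ Y`, `2 ↦ t`. -/
def kernelPoly (St : Finset (ℤ × ℤ)) (w : ℤ × ℤ → ℂ) (mx my : ℕ) :
    MvPolynomial (Fin 3) ℂ :=
  MvPolynomial.X 0 ^ mx * MvPolynomial.X 1 ^ my -
    MvPolynomial.X 2 *
      ∑ p ∈ St, MvPolynomial.C (w p) *
        MvPolynomial.X 0 ^ (p.1 + (mx : ℤ)).toNat *
        MvPolynomial.X 1 ^ (p.2 + (my : ℤ)).toNat

/-- `-mx` (resp. `-my`) is the smallest `X`-exponent (resp. `Y`-exponent) of the model. -/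
structure ExponentBounds (St : Finset (ℤ × ℤ)) (mx my : ℕ) : Prop where
  lowerX : ∀ p ∈ St, -(mx : ℤ) ≤ p.1
  lowerY : ∀ p ∈ St, -(my : ℤ) ≤ p.2
  attainX : ∃ p ∈ St, p.1 = -(mx : ℤ)
  attainY : ∃ p ∈ St, p.2 = -(my : ℤ)

/-- `x`-adjacency : equal first coordinates and equal values of `S`. -/
def XAdj (St : Finset (ℤ × ℤ)) (w : ℤ × ℤ → ℂ) (a b : K × K) : Prop :=
  a.1 = b.1 ∧ stepEval St w a.1 a.2 = stepEval St w b.1 b.2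

/-- `y`-adjacency : equal second coordinates and equal values of `S`. -/
def YAdj (St : Finset (ℤ × ℤ)) (w : ℤ × ℤ → ℂ) (a b : K × K) : Prop :=
  a.2 = b.2 ∧ stepEval St w a.1 a.2 = stepEval St w b.1 b.2

/-- Adjacency. -/
def Adj (St : Finset (ℤ × ℤ)) (w : ℤ × ℤ → ℂ) (a b : K × K) : Prop :=
  XAdj St w a b ∨ YAdj St w a b

/-- The orbit of the walk: the equivalence class of `(x,y)` under the
reflexive-transitive closure of adjacency. -/
def orbit (St : Finset (ℤ × ℤ)) (w : ℤ × ℤ → ℂ) (x y : K) : Set (K × K) :=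
  {a | Relation.ReflTransGen (Adj St w) (x, y) a}

/-- `k = ℂ(S(x,y))`. -/
def kF (St : Finset (ℤ × ℤ)) (w : ℤ × ℤ → ℂ) (x y : K) : IntermediateField ℂ K :=
  adjoin ℂ {stepEval St w x y}

/-- `k(x) = ℂ(x, S(x,y))`. -/
def kxF (St : Finset (ℤ × ℤ)) (w : ℤ × ℤ → ℂ) (x y : K) : IntermediateField ℂ K :=
  adjoin ℂ {x, stepEval St w x y}

/-- `k(y) = ℂ(y, S(x,y))`. -/
def kyF (St : Finset (ℤ × ℤ)) (w : ℤ × ℤ → ℂ) (x y : K) : IntermediateField ℂ K :=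
  adjoin ℂ {y, stepEval St w x y}

/-- `k(x,y) = ℂ(x,y)`. -/
def kxyF (x y : K) : IntermediateField ℂ K := adjoin ℂ {x, y}

/-- `k(𝒪)`: the subfield generated over `k` by all coordinates of the orbit. -/
def orbitF (St : Finset (ℤ × ℤ)) (w : ℤ × ℤ → ℂ) (x y : K) : IntermediateField ℂ K :=
  adjoin ℂ ({stepEval St w x y} ∪ {z | ∃ a ∈ orbit St w x y, z = a.1 ∨ z = a.2})

/-- The standing hypotheses: nonzero weights, a non-univariate step polynomial,
`x, y` algebraically independent over `ℂ`, and `𝕂` an algebraic closure of `ℂ(x,y)`. -/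
structure Setting (St : Finset (ℤ × ℤ)) (w : ℤ × ℤ → ℂ) (x y : K) : Prop where
  weight_ne : ∀ p ∈ St, w p ≠ 0
  notUniv : NotUnivariate St
  indep : AlgebraicIndependent ℂ ![x, y]
  algClosed : IsAlgClosed K
  algebraic : Algebra.IsAlgebraic (kxyF x y) K

lemma self_mem_orbit (St : Finset (ℤ × ℤ)) (w : ℤ × ℤ → ℂ) (x y : K) :
    (x, y) ∈ orbit St w x y := Relation.ReflTransGen.refl

lemma x_mem_orbitF (St : Finset (ℤ × ℤ)) (w : ℤ × ℤ → ℂ) (x y : K) :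
    x ∈ orbitF St w x y := by
  apply subset_adjoin
  exact Set.mem_union_right _ ⟨(x, y), self_mem_orbit St w x y, Or.inl rfl⟩

lemma y_mem_orbitF (St : Finset (ℤ × ℤ)) (w : ℤ × ℤ → ℂ) (x y : K) :
    y ∈ orbitF St w x y := by
  apply subset_adjoin
  exact Set.mem_union_right _ ⟨(x, y), self_mem_orbit St w x y, Or.inr rfl⟩

lemma S_mem_orbitF (St : Finset (ℤ × ℤ)) (w : ℤ × ℤ → ℂ) (x y : K) :
    stepEval St w x y ∈ orbitF St w x y := by
  apply subset_adjoin
  exact Set.mem_union_left _ rfl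

lemma x_mem_kxF (St : Finset (ℤ × ℤ)) (w : ℤ × ℤ → ℂ) (x y : K) :
    x ∈ kxF St w x y :=
  subset_adjoin ℂ _ (Set.mem_insert _ _)

lemma S_mem_kxF (St : Finset (ℤ × ℤ)) (w : ℤ × ℤ → ℂ) (x y : K) :
    stepEval St w x y ∈ kxF St w x y :=
  subset_adjoin ℂ _ (Set.mem_insert_of_mem _ rfl)

lemma y_mem_kyF (St : Finset (ℤ × ℤ)) (w : ℤ × ℤ → ℂ) (x y : K) :
    y ∈ kyF St w x y :=
  subset_adjoin ℂ _ (Set.mem_insert _ _)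

lemma S_mem_kyF (St : Finset (ℤ × ℤ)) (w : ℤ × ℤ → ℂ) (x y : K) :
    stepEval St w x y ∈ kyF St w x y :=
  subset_adjoin ℂ _ (Set.mem_insert_of_mem _ rfl)

/-- The subgroup of `ℂ`-automorphisms of `M` fixing the subfield `E` pointwise. -/
def fixingAuts (E M : IntermediateField ℂ K) : Subgroup (↥M ≃ₐ[ℂ] ↥M) where
  carrier := {σ | ∀ (z : K) (_ : z ∈ E) (hzM : z ∈ M), σ ⟨z, hzM⟩ = ⟨z, hzM⟩}
  one_mem' := fun _ _ _ => rfl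
  mul_mem' := by
    intro σ τ hσ hτ z hzE hzM
    show σ (τ ⟨z, hzM⟩) = ⟨z, hzM⟩
    rw [hτ z hzE hzM, hσ z hzE hzM]
  inv_mem' := by
    intro σ hσ z hzE hzM
    show σ.symm ⟨z, hzM⟩ = ⟨z, hzM⟩
    conv_lhs => rw [← hσ z hzE hzM]
    exact σ.symm_apply_apply _

/-- The Galois group `G_x = Gal(k(𝒪)|k(x))`. -/
def Gx (St : Finset (ℤ × ℤ)) (w : ℤ × ℤ → ℂ) (x y : K) :
    Subgroup (↥(orbitF St w x y) ≃ₐ[ℂ] ↥(orbitF St w x y)) :=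
  fixingAuts (kxF St w x y) (orbitF St w x y)

/-- The Galois group `G_y = Gal(k(𝒪)|k(y))`. -/
def Gy (St : Finset (ℤ × ℤ)) (w : ℤ × ℤ → ℂ) (x y : K) :
    Subgroup (↥(orbitF St w x y) ≃ₐ[ℂ] ↥(orbitF St w x y)) :=
  fixingAuts (kyF St w x y) (orbitF St w x y)

/-- The Galois group `G_{xy} = Gal(k(𝒪)|k(x,y))`. -/
def Gxy (St : Finset (ℤ × ℤ)) (w : ℤ × ℤ → ℂ) (x y : K) :
    Subgroup (↥(orbitF St w x y) ≃ₐ[ℂ] ↥(orbitF St w x y)) :=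
  fixingAuts (kxyF x y) (orbitF St w x y)

/-- Extend an automorphism of an intermediate field to a map on all of `K`
(by the identity outside). -/
def extendAut {M : IntermediateField ℂ K} (σ : ↥M ≃ₐ[ℂ] ↥M) (z : K) : K :=
  if h : z ∈ M then (σ ⟨z, h⟩ : K) else z

/-- The coordinate-wise action of an automorphism on a `0`-chain. -/
def actChain {M : IntermediateField ℂ K} (σ : ↥M ≃ₐ[ℂ] ↥M)
    (γ : (K × K) →₀ ℂ) : (K × K) →₀ ℂ :=
  Finsupp.mapDomain (Prod.map (extendAut σ) (extendAut σ)) γ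

/-- Evaluation of a polynomial `P(X,Y,t)` at `(u, v, 1/S(x,y))` for `(u,v) = a`. -/
def evalPt (St : Finset (ℤ × ℤ)) (w : ℤ × ℤ → ℂ) (x y : K)
    (P : MvPolynomial (Fin 3) ℂ) (a : K × K) : K :=
  MvPolynomial.aeval ![a.1, a.2, (stepEval St w x y)⁻¹] P

/-- Evaluation of a polynomial `P(X,Y,t)` at `(x, y, 1/S(x,y))`. -/
def evalXY (St : Finset (ℤ × ℤ)) (w : ℤ × ℤ → ℂ) (x y : K)
    (P : MvPolynomial (Fin 3) ℂ) : K :=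
  evalPt St w x y P (x, y)

/-- Evaluation of the fraction `A/B` at `(a.1, a.2, 1/S(x,y))`. -/
def fracEval (St : Finset (ℤ × ℤ)) (w : ℤ × ℤ → ℂ) (x y : K)
    (A B : MvPolynomial (Fin 3) ℂ) (a : K × K) : K :=
  evalPt St w x y A a / evalPt St w x y B a

/-- Evaluation (orbit sum) of the fraction `A/B` on a `0`-chain. -/
def chainEval (St : Finset (ℤ × ℤ)) (w : ℤ × ℤ → ℂ) (x y : K)
    (A B : MvPolynomial (Fin 3) ℂ) (γ : (K × K) →₀ ℂ) : K :=
  γ.sum fun a c => algebraMap ℂ K c * fracEval St w x y A B a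

/-- A `0`-chain cancels decoupled fractions: the orbit sum of every regular fraction
of the form `F(X,t) + G(Y,t)` on it vanishes. -/
def CancelsDecoupled (St : Finset (ℤ × ℤ)) (w : ℤ × ℤ → ℂ) (mx my : ℕ)
    (x y : K) (α : (K × K) →₀ ℂ) : Prop :=
  ∀ A₁ B₁ A₂ B₂ : MvPolynomial (Fin 3) ℂ,
    A₁ ∈ MvPolynomial.supported ℂ ({0, 2} : Set (Fin 3)) →
    B₁ ∈ MvPolynomial.supported ℂ ({0, 2} : Set (Fin 3)) →
    A₂ ∈ MvPolynomial.supported ℂ ({1, 2} : Set (Fin 3)) →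
    B₂ ∈ MvPolynomial.supported ℂ ({1, 2} : Set (Fin 3)) →
    ¬ kernelPoly St w mx my ∣ B₁ → ¬ kernelPoly St w mx my ∣ B₂ →
    (α.sum fun a c =>
      algebraMap ℂ K c * (fracEval St w x y A₁ B₁ a + fracEval St w x y A₂ B₂ a)) = 0

/-- The field of fractions `ℂ(X,Y,t)`. -/
abbrev FF : Type := FractionRing (MvPolynomial (Fin 3) ℂ)

/-- The inclusion of `ℂ[X,Y,t]` into `ℂ(X,Y,t)`. -/
def toFF (P : MvPolynomial (Fin 3) ℂ) : FF := algebraMap (MvPolynomial (Fin 3) ℂ) FF P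

/-- The regular fraction `A/B` admits a Galois decoupling:
`A/B = F + G + K̃·R` with `F ∈ ℂ(X,t)`, `G ∈ ℂ(Y,t)` and `R` regular. -/
def AdmitsDecoupling (St : Finset (ℤ × ℤ)) (w : ℤ × ℤ → ℂ) (mx my : ℕ)
    (A B : MvPolynomial (Fin 3) ℂ) : Prop :=
  ∃ F₁ F₂ G₁ G₂ R₁ R₂ : MvPolynomial (Fin 3) ℂ,
    F₁ ∈ MvPolynomial.supported ℂ ({0, 2} : Set (Fin 3)) ∧
    F₂ ∈ MvPolynomial.supported ℂ ({0, 2} : Set (Fin 3)) ∧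
    G₁ ∈ MvPolynomial.supported ℂ ({1, 2} : Set (Fin 3)) ∧
    G₂ ∈ MvPolynomial.supported ℂ ({1, 2} : Set (Fin 3)) ∧
    ¬ kernelPoly St w mx my ∣ F₂ ∧ ¬ kernelPoly St w mx my ∣ G₂ ∧
    ¬ kernelPoly St w mx my ∣ R₂ ∧
    toFF A / toFF B =
      toFF F₁ / toFF F₂ + toFF G₁ / toFF G₂ +
        toFF (kernelPoly St w mx my) * (toFF R₁ / toFF R₂)

/-- `(I, J) = (A/B, Cc/D)` is a pair of Galois invariants: `I - J = K̃·R` with `R` regular. -/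
def IsInvariantPair (St : Finset (ℤ × ℤ)) (w : ℤ × ℤ → ℂ) (mx my : ℕ)
    (A B Cc D : MvPolynomial (Fin 3) ℂ) : Prop :=
  ∃ R₁ R₂ : MvPolynomial (Fin 3) ℂ, ¬ kernelPoly St w mx my ∣ R₂ ∧
    toFF A / toFF B - toFF Cc / toFF D =
      toFF (kernelPoly St w mx my) * (toFF R₁ / toFF R₂)

/-- A constant pair of Galois invariants: both members are equivalent to a
common fraction `c ∈ ℂ(t)` modulo `K̃`. -/
def IsConstantPair (St : Finset (ℤ × ℤ)) (w : ℤ × ℤ → ℂ) (mx my : ℕ)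
    (A B Cc D : MvPolynomial (Fin 3) ℂ) : Prop :=
  IsInvariantPair St w mx my A B Cc D ∧
  ∃ c₁ c₂ : MvPolynomial (Fin 3) ℂ,
    c₁ ∈ MvPolynomial.supported ℂ ({2} : Set (Fin 3)) ∧
    c₂ ∈ MvPolynomial.supported ℂ ({2} : Set (Fin 3)) ∧ c₂ ≠ 0 ∧
    IsInvariantPair St w mx my A B c₁ c₂ ∧ IsInvariantPair St w mx my Cc D c₁ c₂

/-- `(γx, γy)` is a pseudo-decoupling of `(x,y)`. -/
def PseudoDecoupling (St : Finset (ℤ × ℤ)) (w : ℤ × ℤ → ℂ) (mx my : ℕ)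
    (x y : K) (γx γy : (K × K) →₀ ℂ) : Prop :=
  ∀ A B : MvPolynomial (Fin 3) ℂ, ¬ kernelPoly St w mx my ∣ B →
    AdmitsDecoupling St w mx my A B →
      fracEval St w x y A B (x, y) =
          chainEval St w x y A B γx + chainEval St w x y A B γy ∧
        chainEval St w x y A B γx ∈ kxF St w x y ∧
        chainEval St w x y A B γy ∈ kyF St w x y

/-- `(gx, gy, a)` is a decoupling of `(x,y)` in the orbit. -/
def IsDecoupling (St : Finset (ℤ × ℤ)) (w : ℤ × ℤ → ℂ) (mx my : ℕ)
    (x y : K) (gx gy a : (K × K) →₀ ℂ) : Prop :=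
  Finsupp.single (x, y) (1 : ℂ) = gx + gy + a ∧
  (∀ σ ∈ Gx St w x y, actChain σ gx = gx) ∧
  (∀ σ ∈ Gy St w x y, actChain σ gy = gy) ∧
  CancelsDecoupled St w mx my x y a

/-- The `x`-part of the boundary of a `1`-chain. -/
def boundaryX (St : Finset (ℤ × ℤ)) (w : ℤ × ℤ → ℂ)
    (c : ((K × K) × (K × K)) →₀ ℂ) : (K × K) →₀ ℂ :=
  c.sum fun e coeff =>
    if XAdj St w e.1 e.2 then
      coeff • (Finsupp.single e.2 (1 : ℂ) - Finsupp.single e.1 (1 : ℂ)) else 0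

/-- The `y`-part of the boundary of a `1`-chain. -/
def boundaryY (St : Finset (ℤ × ℤ)) (w : ℤ × ℤ → ℂ)
    (c : ((K × K) × (K × K)) →₀ ℂ) : (K × K) →₀ ℂ :=
  c.sum fun e coeff =>
    if YAdj St w e.1 e.2 then
      coeff • (Finsupp.single e.2 (1 : ℂ) - Finsupp.single e.1 (1 : ℂ)) else 0

/-- The `0`-chain induced by a bicolored loop. -/
def IsBicoloredChain (St : Finset (ℤ × ℤ)) (w : ℤ × ℤ → ℂ) (x y : K)
    (α : (K × K) →₀ ℂ) : Prop :=
  ∃ (n : ℕ) (b : ℕ → K × K), 0 < n ∧ b (2 * n) = b 0 ∧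
    (∀ j < 2 * n, b j ∈ orbit St w x y) ∧
    (∀ i < n, XAdj St w (b (2 * i)) (b (2 * i + 1)) ∧
      YAdj St w (b (2 * i + 1)) (b (2 * i + 2))) ∧
    α = ∑ j ∈ Finset.range (2 * n), ((-1 : ℂ) ^ (j + 1)) • Finsupp.single (b j) (1 : ℂ)

/-- The `0`-chain `ω = (1/|𝒪|) ∑_{a ∈ 𝒪} a`. -/
def omegaChain (St : Finset (ℤ × ℤ)) (w : ℤ × ℤ → ℂ) (x y : K)
    (h : (orbit St w x y).Finite) : (K × K) →₀ ℂ :=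
  ((h.toFinset.card : ℂ))⁻¹ • ∑ a ∈ h.toFinset, Finsupp.single a (1 : ℂ)

/-- The average `[G]·γ = (1/|G|) ∑_{σ ∈ G} σ·γ` of a `0`-chain under a group. -/
def groupAverage {M : IntermediateField ℂ K} (G : Subgroup (↥M ≃ₐ[ℂ] ↥M))
    (γ : (K × K) →₀ ℂ) : (K × K) →₀ ℂ :=
  ((Nat.card G : ℂ))⁻¹ • ∑ᶠ σ ∈ (G : Set (↥M ≃ₐ[ℂ] ↥M)), actChain σ γ

/-- `ℂ[X,t]` (two variables: `0` and `1`). -/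
abbrev MvP2 : Type := MvPolynomial (Fin 2) ℂ

/-- `ℂ(X,t)`, the fraction field of `ℂ[X,t]`. -/
abbrev CXt : Type := FractionRing MvP2

/-- Constants `ℂ → ℂ(X,t)`. -/
def cconst : ℂ →+* CXt := (algebraMap MvP2 CXt).comp (MvPolynomial.C)

/-- The first generator of `ℂ(X,t)`. -/
def gen0 : CXt := algebraMap MvP2 CXt (MvPolynomial.X 0)

/-- The second generator of `ℂ(X,t)`. -/
def gen1 : CXt := algebraMap MvP2 CXt (MvPolynomial.X 1)

/-- The kernel polynomial viewed as a polynomial in `Y` over `ℂ(X,t)`. -/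
def kernelInY (St : Finset (ℤ × ℤ)) (w : ℤ × ℤ → ℂ) (mx my : ℕ) :
    Polynomial CXt :=
  MvPolynomial.eval₂ ((Polynomial.C : CXt →+* Polynomial CXt).comp cconst)
    ![Polynomial.C gen0, Polynomial.X, Polynomial.C gen1]
    (kernelPoly St w mx my)

/-- The kernel polynomial viewed as a polynomial in `X` over `ℂ(Y,t)`. -/
def kernelInX (St : Finset (ℤ × ℤ)) (w : ℤ × ℤ → ℂ) (mx my : ℕ) :
    Polynomial CXt :=
  MvPolynomial.eval₂ ((Polynomial.C : CXt →+* Polynomial CXt).comp cconst)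
    ![Polynomial.X, Polynomial.C gen0, Polynomial.C gen1]
    (kernelPoly St w mx my)

/-- The kernel polynomial viewed as a polynomial in `X, Y` over `ℂ(t)`. -/
def kernelInXY (St : Finset (ℤ × ℤ)) (w : ℤ × ℤ → ℂ) (mx my : ℕ) :
    MvPolynomial (Fin 2) (RatFunc ℂ) :=
  MvPolynomial.eval₂
    ((MvPolynomial.C : RatFunc ℂ →+* MvPolynomial (Fin 2) (RatFunc ℂ)).comp
      (RatFunc.C : ℂ →+* RatFunc ℂ))
    ![MvPolynomial.X 0, MvPolynomial.X 1, MvPolynomial.C RatFunc.X]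
    (kernelPoly St w mx my)

/-- The specialization `K̃(x, Y, 1/S(x,y))` as a polynomial in `Y` over `k(x)`. -/
def kernelAtX (St : Finset (ℤ × ℤ)) (w : ℤ × ℤ → ℂ) (mx my : ℕ) (x y : K) :
    Polynomial ↥(kxF St w x y) :=
  MvPolynomial.aeval
    ![Polynomial.C (⟨x, x_mem_kxF St w x y⟩ : kxF St w x y), Polynomial.X,
      Polynomial.C (⟨(stepEval St w x y)⁻¹, inv_mem (S_mem_kxF St w x y)⟩ : kxF St w x y)]
    (kernelPoly St w mx my)

/-- The specialization `K̃(X, y, 1/S(x,y))` as a polynomial in `X` over `k(y)`. -/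
def kernelAtY (St : Finset (ℤ × ℤ)) (w : ℤ × ℤ → ℂ) (mx my : ℕ) (x y : K) :
    Polynomial ↥(kyF St w x y) :=
  MvPolynomial.aeval
    ![Polynomial.X, Polynomial.C (⟨y, y_mem_kyF St w x y⟩ : kyF St w x y),
      Polynomial.C (⟨(stepEval St w x y)⁻¹, inv_mem (S_mem_kyF St w x y)⟩ : kyF St w x y)]
    (kernelPoly St w mx my)

/-- Values of regular fractions with numerator and denominator supported on a set
of variables. -/
def regRange (St : Finset (ℤ × ℤ)) (w : ℤ × ℤ → ℂ) (x y : K) (mx my : ℕ)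
    (s : Set (Fin 3)) : Set K :=
  {z | ∃ A B : MvPolynomial (Fin 3) ℂ,
    A ∈ MvPolynomial.supported ℂ s ∧ B ∈ MvPolynomial.supported ℂ s ∧
    ¬ kernelPoly St w mx my ∣ B ∧ z = evalXY St w x y A / evalXY St w x y B}

end QuadrantWalk
namespace QuadrantWalk

section

variable {K : Type} [Field K] [Algebra ℂ K]

open scoped IntermediateField.algebraAdjoinAdjoin in
theorem algebraicIndependent_pair_iff {u v : K} :
    AlgebraicIndependent ℂ ![u, v] ↔
      Transcendental ℂ u ∧ Transcendental (IntermediateField.adjoin ℂ {u}) v := by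
  have e : AlgebraicIndependent ℂ ![u, v] ↔
      AlgebraicIndependent ℂ (fun o : Option (Fin 1) => o.elim v ![u]) := by
    rw [← algebraicIndependent_equiv (finSuccEquivLast (n := 1))]
    have h : (![u, v] : Fin 2 → K) = (fun o : Option (Fin 1) => o.elim v ![u]) ∘
        finSuccEquivLast (n := 1) := by
      funext i
      fin_cases i <;> rfl
    rw [h]
  rw [e, AlgebraicIndependent.option_iff]
  have h1 : AlgebraicIndependent ℂ ![u] ↔ Transcendental ℂ u := by
    rw [algebraicIndependent_unique_type_iff]; simp
  have h2 : Set.range ![u] = {u} := by simp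
  rw [h1, h2, Transcendental, Transcendental,
    IsFractionRing.isAlgebraic_iff
      (Algebra.adjoin ℂ {u}) (IntermediateField.adjoin ℂ {u}) K]
  simp only [Transcendental]

theorem algebraicIndependent_pair_swap {u v : K} (h : AlgebraicIndependent ℂ ![u, v]) :
    AlgebraicIndependent ℂ ![v, u] := by
  have := h.comp ![1, 0] (by decide)
  convert! this using 1
  funext i
  fin_cases i <;> rfl

/-- A nontrivial Laurent polynomial relation `∑ w u^f v^g ∈ E` makes `v` algebraic over `E`. -/
theorem isAlgebraic_of_laurent_mem (St : Finset (ℤ × ℤ)) (w : ℤ × ℤ → ℂ)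
    (hw : ∀ p ∈ St, w p ≠ 0) (f g : ℤ × ℤ → ℤ)
    (hfg : ∀ p q : ℤ × ℤ, f p = f q → g p = g q → p = q)
    (m n : ℕ) (hf : ∀ p ∈ St, -(m : ℤ) ≤ f p) (hg : ∀ p ∈ St, -(n : ℤ) ≤ g p)
    (hne : ∃ p ∈ St, ∃ q ∈ St, g p ≠ g q)
    {u v : K} (hu : Transcendental ℂ u) (E : IntermediateField ℂ K) (huE : u ∈ E)
    (hs : ∑ p ∈ St, algebraMap ℂ K (w p) * u ^ f p * v ^ g p ∈ E) : IsAlgebraic E v := by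
  by_cases hv : v = 0
  · subst hv; exact isAlgebraic_zero
  have hu0 : u ≠ 0 := fun h => hu (h ▸ isAlgebraic_zero)
  obtain ⟨p₀, hp₀, hgp₀⟩ : ∃ p ∈ St, g p ≠ 0 := by
    obtain ⟨p, hp, q, hq, hpq⟩ := hne
    by_cases h : g p = 0
    · exact ⟨q, hq, fun h' => hpq (h.trans h'.symm)⟩
    · exact ⟨p, hp, h⟩
  set s : E := ⟨_, hs⟩ with hsdef
  set u' : E := ⟨u, huE⟩ with hu'
  let P : Polynomial E := ∑ p ∈ St,
    Polynomial.monomial (g p + n).toNat (algebraMap ℂ E (w p) * u' ^ f p) -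
      Polynomial.monomial n s
  refine ⟨P, fun hP => ?_, ?_⟩
  · have hc : P.coeff (g p₀ + n).toNat = 0 := by rw [hP, Polynomial.coeff_zero]
    have hn : n ≠ (g p₀ + n).toNat := by have := hg p₀ hp₀; omega
    simp only [P, Polynomial.coeff_sub, Polynomial.finsetSum_coeff, Polynomial.coeff_monomial,
      if_neg hn, sub_zero] at hc
    let Q : Polynomial ℂ := ∑ p ∈ St, Polynomial.monomial (f p + m).toNat
      (if (g p + n).toNat = (g p₀ + n).toNat then w p else 0)
    refine hu ⟨Q, fun hQ => ?_, ?_⟩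
    · have h0 : Q.coeff (f p₀ + m).toNat = 0 := by rw [hQ, Polynomial.coeff_zero]
      simp only [Q, Polynomial.finsetSum_coeff, Polynomial.coeff_monomial] at h0
      rw [Finset.sum_eq_single_of_mem p₀ hp₀] at h0
      · simp at h0; exact hw p₀ hp₀ h0
      · intro q hq hqp
        have := hg p₀ hp₀; have := hg q hq; have := hf p₀ hp₀; have := hf q hq
        split_ifs with h1 h2
        · exact absurd (hfg q p₀ (by omega) (by omega)) hqp
        all_goals rfl
    · suffices h : Polynomial.aeval u Q = u ^ m * algebraMap E K (∑ p ∈ St,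
          if (g p + n).toNat = (g p₀ + n).toNat then algebraMap ℂ E (w p) * u' ^ f p else 0) by
        rw [h, hc, map_zero, mul_zero]
      simp only [Q, map_sum, Polynomial.aeval_monomial, Finset.mul_sum]
      refine Finset.sum_congr rfl fun p hp => ?_
      have hz : u ^ (f p + m).toNat = u ^ m * u ^ f p := by
        rw [← zpow_natCast, ← zpow_natCast, ← zpow_add₀ hu0]
        congr 1
        have := hf p hp
        omega
      split_ifs
      · rw [hz, map_mul, map_zpow₀]
        simp only [hu', IntermediateField.algebraMap_apply]
        rw [IntermediateField.coe_algebraMap_apply]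
        ring
      · simp
  · simp only [P, map_sub, map_sum, Polynomial.aeval_monomial]
    have hs' : algebraMap E K s = ∑ p ∈ St, algebraMap ℂ K (w p) * u ^ f p * v ^ g p := rfl
    rw [hs', Finset.sum_mul, ← Finset.sum_sub_distrib]
    refine Finset.sum_eq_zero fun p hp => ?_
    have hz : v ^ (g p + n).toNat = v ^ g p * v ^ n := by
      rw [← zpow_natCast, ← zpow_natCast, ← zpow_add₀ hv]
      congr 1
      have := hg p hp
      omega
    rw [hz, map_mul, map_zpow₀]
    simp only [hu', IntermediateField.algebraMap_apply]
    rw [IntermediateField.coe_algebraMap_apply]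
    ring

/-- Exchanging `v` for another solution of the same Laurent relation over `u` preserves
algebraic independence. -/
theorem algebraicIndependent_of_laurent_eq (St : Finset (ℤ × ℤ)) (w : ℤ × ℤ → ℂ)
    (hw : ∀ p ∈ St, w p ≠ 0) (f g : ℤ × ℤ → ℤ)
    (hfg : ∀ p q : ℤ × ℤ, f p = f q → g p = g q → p = q)
    (m n : ℕ) (hf : ∀ p ∈ St, -(m : ℤ) ≤ f p) (hg : ∀ p ∈ St, -(n : ℤ) ≤ g p)
    (hne : ∃ p ∈ St, ∃ q ∈ St, g p ≠ g q)
    {u v v' : K} (h : AlgebraicIndependent ℂ ![u, v])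
    (heq : ∑ p ∈ St, algebraMap ℂ K (w p) * u ^ f p * v ^ g p =
      ∑ p ∈ St, algebraMap ℂ K (w p) * u ^ f p * v' ^ g p) :
    AlgebraicIndependent ℂ ![u, v'] := by
  rw [algebraicIndependent_pair_iff] at h ⊢
  refine ⟨h.1, fun hv' => h.2 ?_⟩
  let L := algebraicClosure (IntermediateField.adjoin ℂ {u}) K
  have hv'L : v' ∈ L := mem_algebraicClosure_iff.mpr hv'
  have huL : u ∈ L := L.algebraMap_mem ⟨u, IntermediateField.mem_adjoin_simple_self ℂ u⟩
  have hL : IsAlgebraic L v := by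
    refine isAlgebraic_of_laurent_mem St w hw f g hfg m n hf hg hne h.1
      (L.restrictScalars ℂ) huL ?_
    rw [heq]
    refine sum_mem fun p _ => mul_mem (mul_mem ?_ (zpow_mem huL _)) (zpow_mem hv'L _)
    exact (L.restrictScalars ℂ).algebraMap_mem _
  exact hL.restrictScalars (IntermediateField.adjoin ℂ {u})

variable {St : Finset (ℤ × ℤ)} {w : ℤ × ℤ → ℂ} {x y : K} {mx my : ℕ}

theorem stepEval_eq_swapped_sum (u v : K) :
    stepEval St w u v = ∑ p ∈ St, algebraMap ℂ K (w p) * v ^ p.2 * u ^ p.1 :=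
  Finset.sum_congr rfl fun _ _ => by ring

theorem Setting.adj_indep (hset : Setting St w x y) (hb : ExponentBounds St mx my)
    {a b : K × K} (ha : AlgebraicIndependent ℂ ![a.1, a.2]) (hab : Adj St w a b) :
    AlgebraicIndependent ℂ ![b.1, b.2] ∧
      stepEval St w b.1 b.2 = stepEval St w a.1 a.2 := by
  obtain ⟨u, v⟩ := a
  obtain ⟨u', v'⟩ := b
  rcases hab with ⟨h1, h2⟩ | ⟨h1, h2⟩
  · refine ⟨?_, h2.symm⟩
    simp only at h1 h2 ha ⊢
    subst h1
    exact algebraicIndependent_of_laurent_eq St w hset.weight_ne Prod.fst Prod.snd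
      (fun p q => Prod.ext) mx my hb.lowerX hb.lowerY hset.notUniv.2 ha h2
  · refine ⟨?_, h2.symm⟩
    simp only at h1 h2 ha ⊢
    subst h1
    rw [stepEval_eq_swapped_sum, stepEval_eq_swapped_sum] at h2
    exact algebraicIndependent_pair_swap <| algebraicIndependent_of_laurent_eq St w
      hset.weight_ne Prod.snd Prod.fst (fun p q h h' => Prod.ext h' h) my mx hb.lowerY hb.lowerX
      hset.notUniv.1 (algebraicIndependent_pair_swap ha) h2

theorem Setting.orbit_indep (hset : Setting St w x y) (hb : ExponentBounds St mx my)
    {a : K × K} (ha : a ∈ orbit St w x y) :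
    AlgebraicIndependent ℂ ![a.1, a.2] ∧ stepEval St w a.1 a.2 = stepEval St w x y := by
  induction ha with
  | refl => exact ⟨hset.indep, rfl⟩
  | tail _ h ih =>
    obtain ⟨h1, h2⟩ := hset.adj_indep hb ih.1 h
    exact ⟨h1, h2.trans ih.2⟩

theorem isAlgebraic_of_isAlgebraic_adjoin_pair {u v : K} (E : IntermediateField ℂ K)
    (h : Algebra.IsAlgebraic (kxyF u v) K) (hu : IsAlgebraic E u) (hv : IsAlgebraic E v) :
    Algebra.IsAlgebraic E K := by
  let L := algebraicClosure E K
  have hle : kxyF u v ≤ L.restrictScalars ℂ := by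
    refine IntermediateField.adjoin_le_iff.mpr ?_
    rintro z (rfl | rfl)
    · exact mem_algebraicClosure_iff.mpr hu
    · exact mem_algebraicClosure_iff.mpr hv
  refine ⟨fun z => ?_⟩
  have hz : IsAlgebraic L z := by
    let := (IntermediateField.inclusion hle).toRingHom.toAlgebra
    have : IsScalarTower (kxyF u v) (L.restrictScalars ℂ) K := IsScalarTower.of_algebraMap_eq' rfl
    exact (h.isAlgebraic z).extendScalars (R := kxyF u v) (S := L.restrictScalars ℂ)
      (IntermediateField.inclusion hle).injective
  exact hz.restrictScalars E

theorem Setting.isAlgebraic_kxF (hset : Setting St w x y) (hb : ExponentBounds St mx my) :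
    Algebra.IsAlgebraic (kxF St w x y) K := by
  have hx := (algebraicIndependent_pair_iff.mp hset.indep).1
  have hy : IsAlgebraic (kxF St w x y) y :=
    isAlgebraic_of_laurent_mem St w hset.weight_ne Prod.fst Prod.snd
      (fun p q => Prod.ext) mx my hb.lowerX hb.lowerY hset.notUniv.2 hx _
      (x_mem_kxF St w x y) (S_mem_kxF St w x y)
  exact isAlgebraic_of_isAlgebraic_adjoin_pair _ hset.algebraic
    (isAlgebraic_algebraMap (⟨x, x_mem_kxF St w x y⟩ : kxF St w x y)) hy

theorem Setting.isAlgebraic_kyF (hset : Setting St w x y) (hb : ExponentBounds St mx my) :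
    Algebra.IsAlgebraic (kyF St w x y) K := by
  have hy := (algebraicIndependent_pair_iff.mp (algebraicIndependent_pair_swap hset.indep)).1
  have hx : IsAlgebraic (kyF St w x y) x := by
    refine isAlgebraic_of_laurent_mem St w hset.weight_ne Prod.snd Prod.fst
      (fun p q h h' => Prod.ext h' h) my mx hb.lowerY hb.lowerX hset.notUniv.1 hy _
      (y_mem_kyF St w x y) ?_
    rw [← stepEval_eq_swapped_sum]
    exact S_mem_kyF St w x y
  exact isAlgebraic_of_isAlgebraic_adjoin_pair _ hset.algebraic hx
    (isAlgebraic_algebraMap (⟨y, y_mem_kyF St w x y⟩ : kyF St w x y))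

/-- The coefficient of `-t` in the kernel polynomial: `X^mx * Y^my * S(X,Y)`. -/
def stepNumerator (St : Finset (ℤ × ℤ)) (w : ℤ × ℤ → ℂ) (mx my : ℕ) :
    MvPolynomial (Fin 3) ℂ :=
  ∑ p ∈ St, MvPolynomial.C (w p) *
    MvPolynomial.X 0 ^ (p.1 + (mx : ℤ)).toNat * MvPolynomial.X 1 ^ (p.2 + (my : ℤ)).toNat

theorem kernelPoly_eq (St : Finset (ℤ × ℤ)) (w : ℤ × ℤ → ℂ) (mx my : ℕ) :
    kernelPoly St w mx my = MvPolynomial.X 0 ^ mx * MvPolynomial.X 1 ^ my -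
      MvPolynomial.X 2 * stepNumerator St w mx my := rfl

/-- A sum of monomials with pairwise distinct exponents, one of which does not involve `X i`,
is not divisible by `X i`. -/
theorem not_X_dvd_sum_monomial {σ ι : Type*} (s : Finset ι) (e : ι → σ →₀ ℕ) (c : ι → ℂ)
    (he : Set.InjOn e s) {i : σ} {p : ι} (hp : p ∈ s) (hc : c p ≠ 0) (hi : e p i = 0) :
    ¬ MvPolynomial.X i ∣ ∑ q ∈ s, MvPolynomial.monomial (e q) (c q) := by
  rintro ⟨R, hR⟩
  have h := congrArg (MvPolynomial.coeff (e p)) hR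
  rw [MvPolynomial.coeff_X_mul', if_neg (by simpa using hi), MvPolynomial.coeff_sum,
    Finset.sum_eq_single_of_mem p hp] at h
  · simp at h
    exact hc h
  · intro q hq hqp
    rw [MvPolynomial.coeff_monomial, if_neg fun h => hqp (he hq hp h)]

theorem stepNumerator_eq_sum_monomial : stepNumerator St w mx my =
    ∑ p ∈ St, MvPolynomial.monomial
      (Finsupp.single 0 (p.1 + (mx : ℤ)).toNat + Finsupp.single 1 (p.2 + (my : ℤ)).toNat)
      (w p) := by
  refine Finset.sum_congr rfl fun p _ => ?_
  rw [MvPolynomial.C_mul_X_pow_eq_monomial, MvPolynomial.X_pow_eq_monomial,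
    MvPolynomial.monomial_mul, mul_one]

theorem isRelPrime_kernelPoly_stepNumerator (hw : ∀ p ∈ St, w p ≠ 0)
    (hb : ExponentBounds St mx my) :
    IsRelPrime (kernelPoly St w mx my) (stepNumerator St w mx my) := by
  have he : Set.InjOn (fun p : ℤ × ℤ => (Finsupp.single 0 (p.1 + (mx : ℤ)).toNat +
      Finsupp.single 1 (p.2 + (my : ℤ)).toNat : Fin 3 →₀ ℕ)) St := by
    intro p hp q hq h
    have h0 := DFunLike.congr_fun h 0
    have h1 := DFunLike.congr_fun h 1
    simp at h0 h1
    have := hb.lowerX p hp; have := hb.lowerX q hq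
    have := hb.lowerY p hp; have := hb.lowerY q hq
    exact Prod.ext (by omega) (by omega)
  have hX : ¬ MvPolynomial.X 0 ∣ stepNumerator St w mx my := by
    obtain ⟨p, hp, h⟩ := hb.attainX
    rw [stepNumerator_eq_sum_monomial]
    exact not_X_dvd_sum_monomial St _ w he hp (hw p hp) (by simp [h])
  have hY : ¬ MvPolynomial.X 1 ∣ stepNumerator St w mx my := by
    obtain ⟨p, hp, h⟩ := hb.attainY
    rw [stepNumerator_eq_sum_monomial]
    exact not_X_dvd_sum_monomial St _ w he hp (hw p hp) (by simp [h])
  have hrel : IsRelPrime (MvPolynomial.X 0 ^ mx * MvPolynomial.X 1 ^ my)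
      (stepNumerator St w mx my) :=
    IsRelPrime.mul_left
      (IsRelPrime.pow_left
        (MvPolynomial.X_prime.irreducible.isRelPrime_iff_not_dvd.mpr hX))
      (IsRelPrime.pow_left
        (MvPolynomial.X_prime.irreducible.isRelPrime_iff_not_dvd.mpr hY))
  intro d h1 h2
  refine hrel ?_ h2
  have := dvd_add h1 (h2.mul_left (MvPolynomial.X 2))
  rwa [kernelPoly_eq, sub_add_cancel] at this

/-- Modulo the kernel polynomial, `t` can be eliminated after multiplication by a power of
`X^mx * Y^my * S(X,Y)`. -/
theorem exists_kernelPoly_dvd_pow_mul_sub (P : MvPolynomial (Fin 3) ℂ) :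
    ∃ (n : ℕ) (Q : MvPolynomial (Fin 2) ℂ), kernelPoly St w mx my ∣
      stepNumerator St w mx my ^ n * P - MvPolynomial.rename Fin.castSucc Q := by
  set N := stepNumerator St w mx my with hN
  induction P using MvPolynomial.induction_on with
  | C c => exact ⟨0, MvPolynomial.C c, by simp⟩
  | add p q hp hq =>
    obtain ⟨n, P, hP⟩ := hp
    obtain ⟨m, Q, hQ⟩ := hq
    obtain ⟨N', hN'⟩ : ∃ N' : MvPolynomial (Fin 2) ℂ,
        MvPolynomial.rename Fin.castSucc N' = N := by
      refine ⟨∑ p ∈ St, MvPolynomial.C (w p) *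
        MvPolynomial.X 0 ^ (p.1 + (mx : ℤ)).toNat *
        MvPolynomial.X 1 ^ (p.2 + (my : ℤ)).toNat, ?_⟩
      simp [hN, stepNumerator]
    refine ⟨n + m, N' ^ m * P + N' ^ n * Q, ?_⟩
    convert! dvd_add (hP.mul_left (N ^ m)) (hQ.mul_left (N ^ n)) using 1
    simp only [map_add, map_mul, map_pow, hN']
    ring
  | mul_X p i hp =>
    obtain ⟨n, P, hP⟩ := hp
    fin_cases i
    · refine ⟨n, P * MvPolynomial.X 0, ?_⟩
      convert! hP.mul_right (MvPolynomial.X 0) using 1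
      simp
      ring
    · refine ⟨n, P * MvPolynomial.X 1, ?_⟩
      convert! hP.mul_right (MvPolynomial.X 1) using 1
      simp
      ring
    · refine ⟨n + 1, P * (MvPolynomial.X 0 ^ mx * MvPolynomial.X 1 ^ my), ?_⟩
      convert! dvd_sub (hP.mul_right (MvPolynomial.X 2 * N))
        (dvd_mul_left (kernelPoly St w mx my) (MvPolynomial.rename Fin.castSucc P)) using 1
      rw [kernelPoly_eq, ← hN]
      simp
      ring

theorem Setting.stepEval_ne_zero (hset : Setting St w x y) (hb : ExponentBounds St mx my) :
    stepEval St w x y ≠ 0 := by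
  intro h0
  have hxy := algebraicIndependent_pair_iff.mp hset.indep
  refine hxy.2 (isAlgebraic_of_laurent_mem St w hset.weight_ne Prod.fst Prod.snd
    (fun p q => Prod.ext) mx my hb.lowerX hb.lowerY hset.notUniv.2 hxy.1 _
    (IntermediateField.mem_adjoin_simple_self ℂ x) ?_)
  have := zero_mem (IntermediateField.adjoin ℂ {x})
  rwa [← h0] at this

theorem Setting.evalPt_eq_zero_iff (hset : Setting St w x y) (hb : ExponentBounds St mx my)
    {a : K × K} (ha : a ∈ orbit St w x y) (P : MvPolynomial (Fin 3) ℂ) :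
    evalPt St w x y P a = 0 ↔ kernelPoly St w mx my ∣ P := by
  obtain ⟨hind, hS⟩ := hset.orbit_indep hb ha
  have hu : a.1 ≠ 0 := fun h => (algebraicIndependent_pair_iff.mp hind).1 (h ▸ isAlgebraic_zero)
  have hv : a.2 ≠ 0 := fun h =>
    (algebraicIndependent_pair_iff.mp (algebraicIndependent_pair_swap hind)).1
      (h ▸ isAlgebraic_zero)
  have hN : evalPt St w x y (stepNumerator St w mx my) a =
      a.1 ^ mx * a.2 ^ my * stepEval St w x y := by
    rw [← hS]
    simp only [evalPt, stepNumerator, stepEval, map_sum, map_mul, map_pow, MvPolynomial.aeval_X,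
      MvPolynomial.aeval_C, Finset.mul_sum]
    refine Finset.sum_congr rfl fun p hp => ?_
    have h1 : a.1 ^ (p.1 + (mx : ℤ)).toNat = a.1 ^ p.1 * a.1 ^ mx := by
      rw [← zpow_natCast, ← zpow_natCast, ← zpow_add₀ hu, Int.toNat_of_nonneg]
      linarith [hb.lowerX p hp]
    have h2 : a.2 ^ (p.2 + (my : ℤ)).toNat = a.2 ^ p.2 * a.2 ^ my := by
      rw [← zpow_natCast, ← zpow_natCast, ← zpow_add₀ hv, Int.toNat_of_nonneg]
      linarith [hb.lowerY p hp]
    simp [h1, h2]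
    ring
  have hs := hset.stepEval_ne_zero hb
  have hK : evalPt St w x y (kernelPoly St w mx my) a = 0 := by
    have : evalPt St w x y (kernelPoly St w mx my) a = a.1 ^ mx * a.2 ^ my -
        (stepEval St w x y)⁻¹ * evalPt St w x y (stepNumerator St w mx my) a := by
      simp [evalPt, kernelPoly_eq]
    rw [this, hN]
    field_simp
    simp
  constructor
  · intro hP
    obtain ⟨n, Q, hQ⟩ := exists_kernelPoly_dvd_pow_mul_sub (St := St) (w := w) (mx := mx)
      (my := my) P
    have hQ0 : Q = 0 := by
      refine (injective_iff_map_eq_zero _).mp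
        (algebraicIndependent_iff_injective_aeval.mp hind) Q ?_
      obtain ⟨R, hR⟩ := hQ
      have h := congrArg (MvPolynomial.aeval ![a.1, a.2, (stepEval St w x y)⁻¹]) hR
      unfold evalPt at hP hK
      rw [map_mul, hK, zero_mul, map_sub, map_mul, hP, mul_zero, zero_sub, neg_eq_zero,
        MvPolynomial.aeval_rename] at h
      rw [← h]
      congr 2
      funext i
      fin_cases i <;> rfl
    rw [hQ0, map_zero, sub_zero] at hQ
    exact (isRelPrime_kernelPoly_stepNumerator hset.weight_ne hb).pow_right.dvd_of_dvd_mul_left hQ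
  · rintro ⟨R, rfl⟩
    unfold evalPt at hK ⊢
    rw [map_mul, hK, zero_mul]

section Evaluation

variable {A B : MvPolynomial (Fin 3) ℂ}

theorem evalPt_mul (P Q : MvPolynomial (Fin 3) ℂ) (a : K × K) :
    evalPt St w x y (P * Q) a = evalPt St w x y P a * evalPt St w x y Q a :=
  map_mul _ P Q

theorem evalPt_add (P Q : MvPolynomial (Fin 3) ℂ) (a : K × K) :
    evalPt St w x y (P + Q) a = evalPt St w x y P a + evalPt St w x y Q a :=
  map_add _ P Q

theorem evalPt_sub (P Q : MvPolynomial (Fin 3) ℂ) (a : K × K) :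
    evalPt St w x y (P - Q) a = evalPt St w x y P a - evalPt St w x y Q a :=
  map_sub _ P Q

theorem chainEval_add (γ₁ γ₂ : (K × K) →₀ ℂ) :
    chainEval St w x y A B (γ₁ + γ₂) =
      chainEval St w x y A B γ₁ + chainEval St w x y A B γ₂ :=
  Finsupp.sum_add_index' (fun _ => by simp) (fun _ _ _ => by rw [map_add, add_mul])

theorem chainEval_single (a : K × K) :
    chainEval St w x y A B (Finsupp.single a 1) = fracEval St w x y A B a := by
  simp [chainEval]

theorem toFF_ne_zero (hB : ¬ kernelPoly St w mx my ∣ B) : toFF B ≠ 0 := by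
  intro h
  refine hB ?_
  rw [(IsFractionRing.injective (MvPolynomial (Fin 3) ℂ) FF) (h.trans (map_zero _).symm)]
  exact dvd_zero _

theorem Setting.fracEval_eq_of_decoupling (hset : Setting St w x y)
    (hb : ExponentBounds St mx my) {a : K × K} (ha : a ∈ orbit St w x y)
    {F₁ F₂ G₁ G₂ R₁ R₂ : MvPolynomial (Fin 3) ℂ}
    (hB : ¬ kernelPoly St w mx my ∣ B) (hF : ¬ kernelPoly St w mx my ∣ F₂)
    (hG : ¬ kernelPoly St w mx my ∣ G₂) (hR : ¬ kernelPoly St w mx my ∣ R₂)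
    (h : toFF A / toFF B = toFF F₁ / toFF F₂ + toFF G₁ / toFF G₂ +
      toFF (kernelPoly St w mx my) * (toFF R₁ / toFF R₂)) :
    fracEval St w x y A B a = fracEval St w x y F₁ F₂ a + fracEval St w x y G₁ G₂ a := by
  have hB' := toFF_ne_zero hB
  have hF' := toFF_ne_zero hF
  have hG' := toFF_ne_zero hG
  have hR' := toFF_ne_zero hR
  have hpoly : A * (F₂ * G₂ * R₂) = B * (F₁ * G₂ * R₂ + G₁ * F₂ * R₂ +
      kernelPoly St w mx my * R₁ * F₂ * G₂) := by
    apply IsFractionRing.injective (MvPolynomial (Fin 3) ℂ) FF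
    simp only [map_mul, map_add]
    change toFF A * (toFF F₂ * toFF G₂ * toFF R₂) = toFF B *
      (toFF F₁ * toFF G₂ * toFF R₂ + toFF G₁ * toFF F₂ * toFF R₂ +
        toFF (kernelPoly St w mx my) * toFF R₁ * toFF F₂ * toFF G₂)
    rw [(div_eq_iff hB').mp h]
    field_simp
  have hev := congrArg (evalPt St w x y · a) hpoly
  have hK := (hset.evalPt_eq_zero_iff hb ha _).mpr (dvd_refl (kernelPoly St w mx my))
  rw [← hset.evalPt_eq_zero_iff hb ha] at hB hF hG hR
  simp only [evalPt_mul, evalPt_add, hK] at hev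
  unfold fracEval
  field_simp
  apply mul_right_cancel₀ hR
  linear_combination hev

/-- Elements of the field generated by some coordinates of `(x, y, 1/S(x,y))` are values of
fractions in the corresponding variables. -/
theorem exists_fracEval_eq_of_mem_adjoin (s : Set (Fin 3)) {z : K}
    (hz : z ∈ IntermediateField.adjoin ℂ (![x, y, (stepEval St w x y)⁻¹] '' s)) :
    ∃ P ∈ MvPolynomial.supported ℂ s, ∃ Q ∈ MvPolynomial.supported ℂ s,
      evalPt St w x y Q (x, y) ≠ 0 ∧ z = fracEval St w x y P Q (x, y) := by
  have key : ∀ r ∈ Algebra.adjoin ℂ (![x, y, (stepEval St w x y)⁻¹] '' s),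
      ∃ P ∈ MvPolynomial.supported ℂ s, evalPt St w x y P (x, y) = r := by
    intro r hr
    have himg : ![x, y, (stepEval St w x y)⁻¹] '' s =
        (MvPolynomial.aeval (R := ℂ) ![x, y, (stepEval St w x y)⁻¹]) '' (MvPolynomial.X '' s) := by
      rw [Set.image_image]
      simp
    rw [himg, ← AlgHom.map_adjoin] at hr
    exact hr
  obtain ⟨r, hr, q, hq, rfl⟩ := IntermediateField.mem_adjoin_iff_div.mp hz
  obtain ⟨P, hP, rfl⟩ := key r hr
  obtain ⟨Q, hQ, rfl⟩ := key q hq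
  by_cases h0 : evalPt St w x y Q (x, y) = 0
  · refine ⟨0, zero_mem _, 1, one_mem _, ?_, ?_⟩
    · simp [evalPt]
    · rw [h0, div_zero, fracEval, evalPt, map_zero, zero_div]
  · exact ⟨P, hP, Q, hQ, h0, rfl⟩

theorem kxF_le : kxF St w x y ≤
    IntermediateField.adjoin ℂ (![x, y, (stepEval St w x y)⁻¹] '' {0, 2}) := by
  refine IntermediateField.adjoin_le_iff.mpr ?_
  rintro z (rfl | rfl)
  · exact IntermediateField.subset_adjoin ℂ _ ⟨0, by simp, rfl⟩
  · have : (stepEval St w x y)⁻¹ ∈ IntermediateField.adjoin ℂ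
        (![x, y, (stepEval St w x y)⁻¹] '' {0, 2}) :=
      IntermediateField.subset_adjoin ℂ _ ⟨2, by simp, rfl⟩
    simpa using inv_mem this

theorem kyF_le : kyF St w x y ≤
    IntermediateField.adjoin ℂ (![x, y, (stepEval St w x y)⁻¹] '' {1, 2}) := by
  refine IntermediateField.adjoin_le_iff.mpr ?_
  rintro z (rfl | rfl)
  · exact IntermediateField.subset_adjoin ℂ _ ⟨1, by simp, rfl⟩
  · have : (stepEval St w x y)⁻¹ ∈ IntermediateField.adjoin ℂ
        (![x, y, (stepEval St w x y)⁻¹] '' {1, 2}) :=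
      IntermediateField.subset_adjoin ℂ _ ⟨2, by simp, rfl⟩
    simpa using inv_mem this

theorem Setting.admitsDecoupling_of_eq_add (hset : Setting St w x y)
    (hb : ExponentBounds St mx my) (hB : ¬ kernelPoly St w mx my ∣ B) {f g : K}
    (hf : f ∈ kxF St w x y) (hg : g ∈ kyF St w x y)
    (h : fracEval St w x y A B (x, y) = f + g) : AdmitsDecoupling St w mx my A B := by
  have hzero := fun P => hset.evalPt_eq_zero_iff hb (self_mem_orbit St w x y) P
  obtain ⟨F₁, hF₁, F₂, hF₂, hF, rfl⟩ := exists_fracEval_eq_of_mem_adjoin _ (kxF_le hf)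
  obtain ⟨G₁, hG₁, G₂, hG₂, hG, rfl⟩ := exists_fracEval_eq_of_mem_adjoin _ (kyF_le hg)
  have hB₀ : evalPt St w x y B (x, y) ≠ 0 := mt (hzero B).mp hB
  have hFd : ¬ kernelPoly St w mx my ∣ F₂ := mt (hzero F₂).mpr hF
  have hGd : ¬ kernelPoly St w mx my ∣ G₂ := mt (hzero G₂).mpr hG
  obtain ⟨R, hR⟩ : kernelPoly St w mx my ∣ A * F₂ * G₂ - F₁ * B * G₂ - G₁ * B * F₂ := by
    rw [← hzero]
    unfold fracEval at h
    simp only [evalPt_sub, evalPt_mul]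
    field_simp at h
    linear_combination h
  have hBFG : ¬ kernelPoly St w mx my ∣ B * F₂ * G₂ := by
    rw [← hzero]
    simp only [evalPt_mul]
    exact mul_ne_zero (mul_ne_zero hB₀ hF) hG
  refine ⟨F₁, F₂, G₁, G₂, R, B * F₂ * G₂, hF₁, hF₂, hG₁, hG₂, hFd, hGd, hBFG, ?_⟩
  have hB' := toFF_ne_zero hB
  have hF' := toFF_ne_zero hFd
  have hG' := toFF_ne_zero hGd
  have hR' : toFF A * toFF F₂ * toFF G₂ - toFF F₁ * toFF B * toFF G₂ -
      toFF G₁ * toFF B * toFF F₂ = toFF (kernelPoly St w mx my) * toFF R := by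
    simpa [toFF] using congrArg toFF hR
  have hmul : toFF (B * F₂ * G₂) = toFF B * toFF F₂ * toFF G₂ := by simp [toFF]
  rw [hmul]
  field_simp
  linear_combination hR'

end Evaluation

section Galois

theorem map_stepEval (τ : K ≃ₐ[ℂ] K) (u v : K) :
    τ (stepEval St w u v) = stepEval St w (τ u) (τ v) := by
  simp [stepEval]

theorem map_mem_orbit (τ : K ≃ₐ[ℂ] K) (hτ : Adj St w (x, y) (τ x, τ y)) {a : K × K}
    (ha : a ∈ orbit St w x y) : Prod.map τ τ a ∈ orbit St w x y := by
  refine Relation.ReflTransGen.head hτ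
    (Relation.ReflTransGen.lift (p := Adj St w) (Prod.map τ τ) ?_ (x, y) a ha)
  rintro ⟨u, v⟩ ⟨u', v'⟩ (⟨h1, h2⟩ | ⟨h1, h2⟩)
  · exact Or.inl ⟨congrArg τ h1, by simpa [map_stepEval] using congrArg τ h2⟩
  · exact Or.inr ⟨congrArg τ h1, by simpa [map_stepEval] using congrArg τ h2⟩

theorem map_mem_orbitF (τ : K ≃ₐ[ℂ] K) (hτ : Adj St w (x, y) (τ x, τ y))
    {z : K} (hz : z ∈ orbitF St w x y) : τ z ∈ orbitF St w x y := by
  suffices h : orbitF St w x y ≤ (orbitF St w x y).comap τ.toAlgHom from h hz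
  refine IntermediateField.adjoin_le_iff.mpr ?_
  rintro z (rfl | ⟨a, ha, rfl | rfl⟩)
  · change τ _ ∈ orbitF St w x y
    have : stepEval St w x y = τ (stepEval St w x y) := by
      rw [map_stepEval]
      exact hτ.elim And.right And.right
    rw [← this]
    exact S_mem_orbitF St w x y
  · exact IntermediateField.subset_adjoin ℂ _ (Or.inr ⟨_, map_mem_orbit τ hτ ha, Or.inl rfl⟩)
  · exact IntermediateField.subset_adjoin ℂ _ (Or.inr ⟨_, map_mem_orbit τ hτ ha, Or.inr rfl⟩)

/-- A chain supported in the orbit and fixed by the automorphisms of `k(𝒪)` over `E` evaluates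
into `E`. -/
theorem chainEval_mem_of_actChain_eq [IsAlgClosed K] (E : IntermediateField ℂ K)
    [Algebra.IsAlgebraic E K] (hS : stepEval St w x y ∈ E)
    (hE : ∀ τ : K ≃ₐ[E] K, Adj St w (x, y) (τ x, τ y)) {γ : (K × K) →₀ ℂ}
    (hγ : ↑γ.support ⊆ orbit St w x y)
    (hfix : ∀ σ ∈ fixingAuts E (orbitF St w x y), actChain σ γ = γ)
    (A B : MvPolynomial (Fin 3) ℂ) : chainEval St w x y A B γ ∈ E := by
  have : IsAlgClosure E K := ⟨inferInstance, inferInstance⟩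
  suffices h : ∀ τ : K ≃ₐ[E] K, τ (chainEval St w x y A B γ) = chainEval St w x y A B γ by
    obtain ⟨z, hz⟩ := (InfiniteGalois.mem_range_algebraMap_iff_fixed _).mpr h
    rw [← hz]
    exact z.2
  intro τ
  let τ' : K ≃ₐ[ℂ] K := τ.restrictScalars ℂ
  let M := orbitF St w x y
  have hM : ∀ z : M, τ' z ∈ M.toSubalgebra := fun z => map_mem_orbitF τ' (hE τ) z.2
  have hM' : ∀ z : M, τ'.symm z ∈ M.toSubalgebra := fun z =>
    map_mem_orbitF τ'.symm (hE τ.symm) z.2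
  let σ : M ≃ₐ[ℂ] M := AlgEquiv.ofAlgHom
    (AlgHom.codRestrict (τ'.toAlgHom.comp M.val) M.toSubalgebra hM)
    (AlgHom.codRestrict (τ'.symm.toAlgHom.comp M.val) M.toSubalgebra hM')
    (by ext z; exact τ'.apply_symm_apply _)
    (by ext z; exact τ'.symm_apply_apply _)
  have hσ : ∀ z ∈ M, extendAut σ z = τ z := fun z hz => dif_pos hz
  have hσE : σ ∈ fixingAuts E M := fun z hzE hzM => Subtype.ext (τ.commutes ⟨z, hzE⟩)
  have hpoint : ∀ a, τ (fracEval St w x y A B a) =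
      fracEval St w x y A B (Prod.map τ τ a) := by
    have hpoly : ∀ (P : MvPolynomial (Fin 3) ℂ) a, τ (evalPt St w x y P a) =
        evalPt St w x y P (Prod.map τ τ a) := by
      intro P a
      refine (DFunLike.congr_fun (MvPolynomial.comp_aeval _ τ'.toAlgHom) P).trans ?_
      rw [evalPt]
      congr 2
      funext i
      have hSτ : τ (stepEval St w x y) = stepEval St w x y := τ.commutes ⟨_, hS⟩
      fin_cases i
      · rfl
      · rfl
      · change τ (stepEval St w x y)⁻¹ = (stepEval St w x y)⁻¹
        rw [map_inv₀, hSτ]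
    intro a
    rw [fracEval, map_div₀, hpoly, hpoly, fracEval]
  conv_rhs => rw [← hfix σ hσE]
  unfold chainEval actChain
  rw [Finsupp.sum_mapDomain_index (fun _ => by simp) (fun _ _ _ => by rw [map_add, add_mul]),
    Finsupp.sum, Finsupp.sum, map_sum]
  refine Finset.sum_congr rfl fun a ha => ?_
  have hmem := hγ ha
  have h1 : a.1 ∈ M := IntermediateField.subset_adjoin ℂ _ (Or.inr ⟨a, hmem, Or.inl rfl⟩)
  have h2 : a.2 ∈ M := IntermediateField.subset_adjoin ℂ _ (Or.inr ⟨a, hmem, Or.inr rfl⟩)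
  have h3 : Prod.map (extendAut σ) (extendAut σ) a = Prod.map τ τ a :=
    Prod.ext (hσ _ h1) (hσ _ h2)
  rw [h3, map_mul, hpoint]
  congr 1
  exact τ'.commutes _

theorem Setting.chainEval_mem_kxF (hset : Setting St w x y) (hb : ExponentBounds St mx my)
    {γ : (K × K) →₀ ℂ} (hγ : ↑γ.support ⊆ orbit St w x y)
    (hfix : ∀ σ ∈ Gx St w x y, actChain σ γ = γ) (A B : MvPolynomial (Fin 3) ℂ) :
    chainEval St w x y A B γ ∈ kxF St w x y := by
  have := hset.algClosed
  have := hset.isAlgebraic_kxF hb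
  refine chainEval_mem_of_actChain_eq _ (S_mem_kxF St w x y) (fun τ => Or.inl ⟨?_, ?_⟩) hγ hfix A B
  · exact (τ.commutes ⟨x, x_mem_kxF St w x y⟩).symm
  · exact (τ.commutes ⟨_, S_mem_kxF St w x y⟩).symm.trans
      (map_stepEval (τ.restrictScalars ℂ) x y)

theorem Setting.chainEval_mem_kyF (hset : Setting St w x y) (hb : ExponentBounds St mx my)
    {γ : (K × K) →₀ ℂ} (hγ : ↑γ.support ⊆ orbit St w x y)
    (hfix : ∀ σ ∈ Gy St w x y, actChain σ γ = γ) (A B : MvPolynomial (Fin 3) ℂ) :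
    chainEval St w x y A B γ ∈ kyF St w x y := by
  have := hset.algClosed
  have := hset.isAlgebraic_kyF hb
  refine chainEval_mem_of_actChain_eq _ (S_mem_kyF St w x y) (fun τ => Or.inr ⟨?_, ?_⟩) hγ hfix A B
  · exact (τ.commutes ⟨y, y_mem_kyF St w x y⟩).symm
  · exact (τ.commutes ⟨_, S_mem_kyF St w x y⟩).symm.trans
      (map_stepEval (τ.restrictScalars ℂ) x y)

end Galois

end

/-- if `(x,y) = γ̃x + γ̃y + α` is a decoupling of `(x,y)` in the orbit
and `H = A/B` is a regular fraction, then the following are equivalent: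
(1) `H` admits a Galois decoupling; (2) `H_α = 0`;
(3) `H_{(x,y)} = H_{γ̃x} + H_{γ̃y}` with `H_{γ̃x} ∈ k(x)` and `H_{γ̃y} ∈ k(y)`. -/
theorem stmt14 {K : Type} [Field K] [Algebra ℂ K]
    (St : Finset (ℤ × ℤ)) (w : ℤ × ℤ → ℂ) (x y : K) (mx my : ℕ)
    (hset : Setting St w x y) (hb : ExponentBounds St mx my)
    (gx gy a : (K × K) →₀ ℂ)
    (hgx : ↑gx.support ⊆ orbit St w x y) (hgy : ↑gy.support ⊆ orbit St w x y)
    (ha : ↑a.support ⊆ orbit St w x y)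
    (hdec : IsDecoupling St w mx my x y gx gy a)
    (A B : MvPolynomial (Fin 3) ℂ) (hB : ¬ kernelPoly St w mx my ∣ B) :
    (AdmitsDecoupling St w mx my A B ↔ chainEval St w x y A B a = 0) ∧
    (AdmitsDecoupling St w mx my A B ↔
      (fracEval St w x y A B (x, y) =
          chainEval St w x y A B gx + chainEval St w x y A B gy ∧
        chainEval St w x y A B gx ∈ kxF St w x y ∧
        chainEval St w x y A B gy ∈ kyF St w x y)) := by
  obtain ⟨hsum, hfx, hfy, hcancel⟩ := hdec
  have hsplit : fracEval St w x y A B (x, y) = chainEval St w x y A B gx +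
      chainEval St w x y A B gy + chainEval St w x y A B a := by
    rw [← chainEval_single, hsum, chainEval_add, chainEval_add]
  have h12 : AdmitsDecoupling St w mx my A B → chainEval St w x y A B a = 0 := by
    rintro ⟨F₁, F₂, G₁, G₂, R₁, R₂, hF₁, hF₂, hG₁, hG₂, hF, hG, hR, h⟩
    rw [← hcancel F₁ F₂ G₁ G₂ hF₁ hF₂ hG₁ hG₂ hF hG]
    refine Finset.sum_congr rfl fun p hp => ?_
    simp only [hset.fracEval_eq_of_decoupling hb (ha hp) hB hF hG hR h]
  have h23 : chainEval St w x y A B a = 0 →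
      fracEval St w x y A B (x, y) =
          chainEval St w x y A B gx + chainEval St w x y A B gy ∧
        chainEval St w x y A B gx ∈ kxF St w x y ∧
        chainEval St w x y A B gy ∈ kyF St w x y := fun h =>
    ⟨by rw [hsplit, h, add_zero], hset.chainEval_mem_kxF hb hgx hfx A B,
      hset.chainEval_mem_kyF hb hgy hfy A B⟩
  have h31 : (fracEval St w x y A B (x, y) =
          chainEval St w x y A B gx + chainEval St w x y A B gy ∧
        chainEval St w x y A B gx ∈ kxF St w x y ∧
        chainEval St w x y A B gy ∈ kyF St w x y) → AdmitsDecoupling St w mx my A B :=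
    fun ⟨h, hx, hy⟩ => hset.admitsDecoupling_of_eq_add hb hB hx hy h
  exact ⟨⟨h12, fun h => h31 (h23 h)⟩, ⟨fun h => h23 (h12 h), h31⟩⟩

end QuadrantWalk
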